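/- arXiv:2006.13066 — 6 statements merged into one kernel-verified Lean document; each statement's English description precedes it below -/
import Mathlib

section
/- Let w1, w2, w3 be real numbers with w1 ≤ w2 ≤ w3 and w1 + w2 + w3 = 0. Then 6·w1·w2·w3 ≤ w3·(w1^2 + w2^2 + w3^2). -/
theorem stmt_3 (w1 w2 w3 : ℝ) (h12 : w1 ≤ w2) (h23 : w2 ≤ w3)
    (hsum : w1 + w2 + w3 = 0) :
    6 * w1 * w2 * w3 ≤ w3 * (w1 ^ 2 + w2 ^ 2 + w3 ^ 2) := by
  have h3 : 0 ≤ w3 := by linarith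
  -- Since `w3 = -(w1 + w2)`, the difference of the two sides is `2 * w3 * (w1 - w2) ^ 2`.
  have key : w1 ^ 2 + w2 ^ 2 + w3 ^ 2 - 6 * w1 * w2 = 2 * (w1 - w2) ^ 2 := by
    obtain rfl : w3 = -(w1 + w2) := by linarith
    ring
  have hnonneg : 0 ≤ w3 * (w1 ^ 2 + w2 ^ 2 + w3 ^ 2 - 6 * w1 * w2) := by
    rw [key]
    positivity
  linarith
end

section
/- Let w1, w2, w3 be real numbers with w1 ≤ w2 ≤ w3 and w1 + w2 + w3 = 0. Then w1·w2·w3 ≤ (√6/18)·(w1^2 + w2^2 + w3^2)^(3/2). -/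
/-! For `w1 + w2 + w3 = 0` and `S = w1 ^ 2 + w2 ^ 2 + w3 ^ 2`, the discriminant of the cubic with
roots `w1, w2, w3` gives
`S ^ 3 - 54 * (w1 * w2 * w3) ^ 2 = 2 * ((w1 - w2) * (w2 - w3) * (w1 - w3)) ^ 2 ≥ 0`.
Since `(√6 / 18) ^ 2 = 1 / 54`, the claim follows by comparing squares. -/

theorem stmt_5 (w1 w2 w3 : ℝ) (h12 : w1 ≤ w2) (h23 : w2 ≤ w3)
    (hsum : w1 + w2 + w3 = 0) :
    w1 * w2 * w3 ≤ (Real.sqrt 6 / 18) * (w1 ^ 2 + w2 ^ 2 + w3 ^ 2) ^ ((3 : ℝ) / 2) := by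
  have hS : 0 ≤ w1 ^ 2 + w2 ^ 2 + w3 ^ 2 := by positivity
  have hpow : ((w1 ^ 2 + w2 ^ 2 + w3 ^ 2) ^ ((3 : ℝ) / 2)) ^ 2
      = (w1 ^ 2 + w2 ^ 2 + w3 ^ 2) ^ 3 := by
    rw [← Real.rpow_mul_natCast hS, ← Real.rpow_natCast]
    norm_num
  have hdisc : (w1 ^ 2 + w2 ^ 2 + w3 ^ 2) ^ 3 - 54 * (w1 * w2 * w3) ^ 2
      = 2 * ((w1 - w2) * (w2 - w3) * (w1 - w3)) ^ 2 := by
    obtain rfl : w3 = -w1 - w2 := by linarith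
    ring
  refine (abs_le_of_sq_le_sq' ?_ (by positivity)).2
  rw [mul_pow (Real.sqrt 6 / 18), hpow, div_pow, Real.sq_sqrt (by norm_num)]
  nlinarith [sq_nonneg ((w1 - w2) * (w2 - w3) * (w1 - w3))]
end

section
/- Let w1, w2, w3 be real numbers with w1 ≤ w2 ≤ w3 and w1 + w2 + w3 = 0. Then w1·w2·w3 = (√6/18)·(w1^2 + w2^2 + w3^2)^(3/2) if and only if w1 = w2. -/
/-!
Write `S = w1² + w2² + w3²` and `P = w1 w2 w3`. Since the `wᵢ` sum to zero, they are the roots of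
`t³ - (S/2) t - P`, whose discriminant gives
`S³/54 - P² = ((w1 - w2)(w2 - w3)(w1 - w3))² / 27`.
The right-hand side of the claimed equality is the nonnegative square root of `S³/54`, so the
equality says that `P ≥ 0` and that two of the `wᵢ` coincide. Given the ordering, `w2 = w3`
forces `P = -2 w2³ ≤ 0`, hence all `wᵢ` vanish; so `w1 = w2` in every case.
-/

/-- The discriminant identity for the depressed cubic with roots `w1`, `w2`, `w3`. -/
lemma discr_identity (w1 w2 w3 : ℝ) (hsum : w1 + w2 + w3 = 0) :
    (w1 ^ 2 + w2 ^ 2 + w3 ^ 2) ^ 3 / 54 - (w1 * w2 * w3) ^ 2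
      = ((w1 - w2) * (w2 - w3) * (w1 - w3)) ^ 2 / 27 := by
  obtain rfl : w3 = -w1 - w2 := by linarith
  ring

theorem stmt_6 (w1 w2 w3 : ℝ) (h12 : w1 ≤ w2) (h23 : w2 ≤ w3)
    (hsum : w1 + w2 + w3 = 0) :
    w1 * w2 * w3 = (Real.sqrt 6 / 18) * (w1 ^ 2 + w2 ^ 2 + w3 ^ 2) ^ ((3 : ℝ) / 2) ↔ w1 = w2 := by
  have hd := discr_identity w1 w2 w3 hsum
  have hS : 0 ≤ w1 ^ 2 + w2 ^ 2 + w3 ^ 2 := by positivity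
  have hR0 : 0 ≤ (Real.sqrt 6 / 18) * (w1 ^ 2 + w2 ^ 2 + w3 ^ 2) ^ ((3 : ℝ) / 2) := by positivity
  have hR : ((Real.sqrt 6 / 18) * (w1 ^ 2 + w2 ^ 2 + w3 ^ 2) ^ ((3 : ℝ) / 2)) ^ 2
      = (w1 ^ 2 + w2 ^ 2 + w3 ^ 2) ^ 3 / 54 := by
    have h : ((w1 ^ 2 + w2 ^ 2 + w3 ^ 2) ^ ((3 : ℝ) / 2)) ^ 2
        = (w1 ^ 2 + w2 ^ 2 + w3 ^ 2) ^ 3 := by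
      rw [← Real.rpow_natCast, ← Real.rpow_mul hS, ← Real.rpow_natCast _ 3]
      norm_num
    rw [mul_pow, h, div_pow, Real.sq_sqrt (by norm_num)]
    ring
  generalize (Real.sqrt 6 / 18) * (w1 ^ 2 + w2 ^ 2 + w3 ^ 2) ^ ((3 : ℝ) / 2) = R at *
  constructor
  · intro h
    have h0 : (w1 - w2) * (w2 - w3) * (w1 - w3) = 0 := by
      rw [← h] at hR
      apply pow_eq_zero_iff (two_ne_zero) |>.mp
      linarith
    rcases mul_eq_zero.mp h0 with h1 | h1
    · rcases mul_eq_zero.mp h1 with h2 | h2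
      · linarith
      · obtain rfl : w2 = w3 := by linarith
        obtain rfl : w1 = -2 * w2 := by linarith
        have hw : 0 ≤ w2 := by linarith
        have hc : w2 ^ 3 = 0 := le_antisymm (by nlinarith) (by positivity)
        have hz : w2 = 0 := pow_eq_zero_iff (three_ne_zero) |>.mp hc
        simp [hz]
    · linarith
  · rintro rfl
    obtain rfl : w3 = -2 * w1 := by linarith
    have hP : 0 ≤ w1 * w1 * (-2 * w1) :=
      mul_nonneg (mul_self_nonneg _) (by linarith)
    refine (pow_left_inj₀ hP hR0 two_ne_zero).mp ?_
    rw [hR]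
    ring
end

section
/- Let λ : Fin 4 → ℝ satisfy ∑ i, λ i = 0. Then 8·((∑ i, λ i ^ 2) ^ 2 − ∑ i, λ i ^ 4) ≤ 6·(∑ i, λ i ^ 2) ^ 2, and equality holds if and only if 4 · ∑ i, λ i ^ 4 = (∑ i, λ i ^ 2) ^ 2. -/
theorem stmt_8 (l : Fin 4 → ℝ) (hsum : ∑ i, l i = 0) :
    8 * ((∑ i, l i ^ 2) ^ 2 - ∑ i, l i ^ 4) ≤ 6 * (∑ i, l i ^ 2) ^ 2 ∧
    (8 * ((∑ i, l i ^ 2) ^ 2 - ∑ i, l i ^ 4) = 6 * (∑ i, l i ^ 2) ^ 2 ↔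
      4 * ∑ i, l i ^ 4 = (∑ i, l i ^ 2) ^ 2) := by
  -- Cauchy–Schwarz for the vectors `(l i ^ 2)` and `(1, 1, 1, 1)`; both claims are linear in it.
  have h : (∑ i, l i ^ 2) ^ 2 ≤ 4 * ∑ i, l i ^ 4 := by
    have := sq_sum_le_card_mul_sum_sq (s := Finset.univ) (f := fun i => l i ^ 2)
    simpa [← pow_mul] using this
  refine ⟨by linarith, fun h' => by linarith, fun h' => by linarith⟩
end

section
/- Let A : Matrix (Fin 4) (Fin 4) ℝ be symmetric (A i j = A j i for all i, j) with trace A = 0. Define T : Fin 4 → Fin 4 → Fin 4 → Fin 4 → ℝ by T i j k l = 2·(A i k · A j l − A i l · A j k). Then ∑ i, ∑ j, ∑ k, ∑ l, (T i j k l)^2 ≤ 6·(trace (A * A))^2, and equality holds if and only if 4·trace (A * A * A * A) = (trace (A * A))^2. -/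
/-!
Write `s = tr A²` and `t = tr A⁴`. Expanding the square of the Kulkarni–Nomizu tensor gives
`|T|² = 8 (s² - t)` for every symmetric `A`, so the inequality `|T|² ≤ 6 s²` and its equality case
amount to `s² ≤ 4 t` and `s² = 4 t`. The former is the Cauchy–Schwarz inequality
`(tr B)² ≤ 4 tr B²` for the symmetric matrix `B = A²`.
-/

lemma sum_kulkarniNomizu_sq (A : Matrix (Fin 4) (Fin 4) ℝ) (hA : ∀ i j, A i j = A j i) :
    (∑ i, ∑ j, ∑ k, ∑ l, (2 * (A i k * A j l - A i l * A j k)) ^ 2) =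
      8 * ((Matrix.trace (A * A)) ^ 2 - Matrix.trace (A * A * A * A)) := by
  simp only [Matrix.trace, Matrix.diag, Matrix.mul_apply, Fin.sum_univ_four]
  rw [hA 1 0, hA 2 0, hA 3 0, hA 2 1, hA 3 1, hA 3 2]
  ring

lemma sq_trace_le_four_mul_trace_sq (B : Matrix (Fin 4) (Fin 4) ℝ) (hB : ∀ i j, B i j = B j i) :
    (Matrix.trace B) ^ 2 ≤ 4 * Matrix.trace (B * B) := by
  have hdiag : (∑ i, B i i) ^ 2 ≤ 4 * ∑ i, B i i ^ 2 := by
    simpa using sq_sum_le_card_mul_sum_sq (s := Finset.univ) (f := fun i => B i i)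
  have hle : ∑ i, B i i ^ 2 ≤ Matrix.trace (B * B) := by
    refine Finset.sum_le_sum fun i _ => ?_
    rw [Matrix.diag_apply, Matrix.mul_apply, sq]
    refine Finset.single_le_sum (f := fun j => B i j * B j i) (fun j _ => ?_) (Finset.mem_univ i)
    rw [hB j i]
    exact mul_self_nonneg _
  exact hdiag.trans (by linarith)

theorem stmt_10 (A : Matrix (Fin 4) (Fin 4) ℝ) (hA : ∀ i j, A i j = A j i)
    (htr : Matrix.trace A = 0) :
    (∑ i, ∑ j, ∑ k, ∑ l, (2 * (A i k * A j l - A i l * A j k)) ^ 2) ≤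
      6 * (Matrix.trace (A * A)) ^ 2 ∧
    ((∑ i, ∑ j, ∑ k, ∑ l, (2 * (A i k * A j l - A i l * A j k)) ^ 2) =
        6 * (Matrix.trace (A * A)) ^ 2 ↔
      4 * Matrix.trace (A * A * A * A) = (Matrix.trace (A * A)) ^ 2) := by
  have hCS := sq_trace_le_four_mul_trace_sq (A * A) fun i j => by
    simp only [Matrix.mul_apply]
    exact Finset.sum_congr rfl fun k _ => by rw [hA i k, hA k j, mul_comm]
  rw [← Matrix.mul_assoc] at hCS
  rw [sum_kulkarniNomizu_sq A hA]
  refine ⟨by linarith, fun h => by linarith, fun h => by linarith⟩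
end

section
/- Let A : Matrix (Fin 4) (Fin 4) ℝ be symmetric (A i j = A j i for all i, j) with trace A = 0, define T : Fin 4 → Fin 4 → Fin 4 → Fin 4 → ℝ by T i j k l = 2·(A i k · A j l − A i l · A j k), and let B : Fin 4 → Fin 4 → Fin 4 → Fin 4 → ℝ be arbitrary. Then ∑ i, ∑ j, ∑ k, ∑ l, (T i j k l)·(B i j k l) ≤ √6 · (trace (A * A)) · Real.sqrt (∑ i, ∑ j, ∑ k, ∑ l, (B i j k l)^2). -/
/-!
By Cauchy–Schwarz over the 4⁴ components it suffices to know `|A ⊙ A|² ≤ 6 (tr A²)²`.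
With the Gram matrix `M = A Aᵀ` (equal to `A²` for symmetric `A`), expanding the square gives
`|A ⊙ A|² = 8 ((tr M)² - |M|²)` (`sum_kulkarni_sq`), and `(tr M)² ≤ 4 ∑ M i i ² ≤ 4 |M|²`
(`sq_sum_diag_le`), whence the factor `8 (1 - 1/4) = 6`.
-/

/-- The squared norm of `A ⊙ A` in terms of the Gram matrix of the rows of `A`. -/
lemma sum_kulkarni_sq {ι : Type*} [Fintype ι] (A : Matrix ι ι ℝ) :
    ∑ i, ∑ j, ∑ k, ∑ l, (2 * (A i k * A j l - A i l * A j k)) ^ 2 =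
      8 * ((∑ i, ∑ k, A i k * A i k) ^ 2 - ∑ i, ∑ j, (∑ k, A i k * A j k) ^ 2) := by
  have hij : ∀ i j, ∑ k, ∑ l, (2 * (A i k * A j l - A i l * A j k)) ^ 2 =
      8 * ((∑ k, A i k * A i k) * (∑ l, A j l * A j l) - (∑ k, A i k * A j k) ^ 2) := by
    intro i j
    have h : ∀ k l, (2 * (A i k * A j l - A i l * A j k)) ^ 2 =
        4 * ((A i k * A i k) * (A j l * A j l)) + 4 * ((A j k * A j k) * (A i l * A i l))
          - 8 * ((A i k * A j k) * (A i l * A j l)) := fun k l => by ring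
    simp only [h, Finset.sum_add_distrib, Finset.sum_sub_distrib, ← Finset.mul_sum,
      ← Finset.sum_mul]
    ring
  simp only [hij, ← Finset.mul_sum, Finset.sum_sub_distrib, ← Finset.sum_mul]
  ring

lemma sq_sum_diag_le {ι : Type*} [Fintype ι] (M : ι → ι → ℝ) :
    (∑ i, M i i) ^ 2 ≤ Fintype.card ι * ∑ i, ∑ j, M i j ^ 2 := by
  refine (sq_sum_le_card_mul_sum_sq (s := Finset.univ) (f := fun i => M i i)).trans ?_
  rw [Finset.card_univ]
  gcongr with i
  exact Finset.single_le_sum (f := fun j => M i j ^ 2) (fun j _ => sq_nonneg _)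
    (Finset.mem_univ i)

lemma sum_four_mul_le_sqrt {ι : Type*} [Fintype ι] (T B : ι → ι → ι → ι → ℝ) :
    ∑ i, ∑ j, ∑ k, ∑ l, T i j k l * B i j k l ≤
      Real.sqrt (∑ i, ∑ j, ∑ k, ∑ l, T i j k l ^ 2) *
        Real.sqrt (∑ i, ∑ j, ∑ k, ∑ l, B i j k l ^ 2) := by
  have h := Real.sum_mul_le_sqrt_mul_sqrt (Finset.univ : Finset (ι × ι × ι × ι))
    (fun p => T p.1 p.2.1 p.2.2.1 p.2.2.2) (fun p => B p.1 p.2.1 p.2.2.1 p.2.2.2)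
  simpa only [Fintype.sum_prod_type] using h

theorem stmt_12 (A : Matrix (Fin 4) (Fin 4) ℝ) (hA : ∀ i j, A i j = A j i)
    (htr : Matrix.trace A = 0) (B : Fin 4 → Fin 4 → Fin 4 → Fin 4 → ℝ) :
    (∑ i, ∑ j, ∑ k, ∑ l, (2 * (A i k * A j l - A i l * A j k)) * B i j k l) ≤
      Real.sqrt 6 * Matrix.trace (A * A) *
        Real.sqrt (∑ i, ∑ j, ∑ k, ∑ l, (B i j k l) ^ 2) := by
  have htrace : Matrix.trace (A * A) = ∑ i, ∑ k, A i k * A i k := by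
    simp only [Matrix.trace, Matrix.diag_apply, Matrix.mul_apply]
    exact Finset.sum_congr rfl fun i _ => Finset.sum_congr rfl fun k _ => by rw [hA k i]
  have hnonneg : 0 ≤ Matrix.trace (A * A) := by
    rw [htrace]
    exact Finset.sum_nonneg fun i _ => Finset.sum_nonneg fun k _ => mul_self_nonneg _
  refine (sum_four_mul_le_sqrt (fun i j k l => 2 * (A i k * A j l - A i l * A j k)) B).trans ?_
  gcongr
  rw [← Real.sqrt_sq hnonneg, ← Real.sqrt_mul (by norm_num)]
  apply Real.sqrt_le_sqrt
  rw [sum_kulkarni_sq A, htrace]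
  have h := sq_sum_diag_le fun i j => ∑ k, A i k * A j k
  rw [Fintype.card_fin] at h
  push_cast at h
  linarith
end
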